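/- Let L ≥ 1 and K ≥ 1 be natural numbers and, for each k ∈ {1,…,K}, let p_k⁰, p_k¹ : Fin L → ℝ be strictly positive functions each summing to 1 (the conditional pmfs of sensor k's quantized output under H₀ and H₁, with the sensors conditionally independent given the hypothesis). Then the average Chernoff information of the joint quantized data is at most the average of the per-sensor Chernoff informations: −(1/K) · inf_{α ∈ [0,1]} log(∑_{u ∈ (Fin L)^K} ∏_{k=1}^{K} p_k⁰(u_k)^α p_k¹(u_k)^{1−α}) ≤ (1/K) · ∑_{k=1}^{K} (− inf_{α ∈ [0,1]} log(∑_{v ∈ Fin L} p_k⁰(v)^α p_k¹(v)^{1−α})). -/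

import Mathlib

open Finset

/-!
For independent sensors the Chernoff coefficient at a fixed exponent `α` factors over the sensors,
so its logarithm is a sum. All summands share the single exponent `α`; letting each sensor choose
its own optimal exponent can only lower the sum, which is the superadditivity of infima.
These infima are finite because a coefficient dominates `min (p v) (q v)` for every letter `v`.
-/

section Infimum

variable {ι β M : Type*} [ConditionallyCompleteLattice M] [AddCommMonoid M] [IsOrderedAddMonoid M]

theorem sum_csInf_image_le_csInf_image_sum {s : Set β} (hs : s.Nonempty) (t : Finset ι)
    {f : ι → β → M} (hf : ∀ i ∈ t, BddBelow (f i '' s)) :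
    ∑ i ∈ t, sInf (f i '' s) ≤ sInf ((fun x => ∑ i ∈ t, f i x) '' s) := by
  refine le_csInf (hs.image _) ?_
  rintro _ ⟨x, hx, rfl⟩
  exact sum_le_sum fun i hi => csInf_le (hf i hi) (Set.mem_image_of_mem _ hx)

end Infimum

theorem min_le_rpow_mul_rpow_one_sub {a b α : ℝ} (ha : 0 ≤ a) (hb : 0 ≤ b)
    (hα : α ∈ Set.Icc (0 : ℝ) 1) : min a b ≤ a ^ α * b ^ (1 - α) := by
  have hmin : 0 ≤ min a b := le_min ha hb
  have hα' : 0 ≤ 1 - α := sub_nonneg.2 hα.2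
  calc
    min a b = min a b ^ α * min a b ^ (1 - α) := by
      rw [← Real.rpow_add_of_nonneg hmin hα.1 hα', add_sub_cancel, Real.rpow_one]
    _ ≤ a ^ α * b ^ (1 - α) :=
      mul_le_mul (Real.rpow_le_rpow hmin (min_le_left a b) hα.1)
        (Real.rpow_le_rpow hmin (min_le_right a b) hα') (Real.rpow_nonneg hmin _)
        (Real.rpow_nonneg ha _)

section SingleSensor

variable {V : Type*} [Fintype V]

/-- The Chernoff `α`-coefficient of two weight functions on a finite alphabet, whose logarithm is
minimised over `α` in the Chernoff information. Because `0 ^ 0 = 1`, at `α = 0` and `α = 1` it is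
the full sum of `q`, resp. `p`, which is at least the limit from inside `(0, 1)`; when the supports
of `p` and `q` meet, this convention therefore does not affect the infimum. -/
noncomputable def chernoffCoeff (p q : V → ℝ) (α : ℝ) : ℝ :=
  ∑ v, p v ^ α * q v ^ (1 - α)

/-- The Chernoff information of two weight functions on a finite alphabet. Being real-valued, it is
meaningful only if the supports of `p` and `q` meet; for disjoint supports the true value is `+∞`,
whereas `Real.log 0 = 0`. -/
noncomputable def chernoffInfo (p q : V → ℝ) : ℝ :=
  -sInf ((fun α => Real.log (chernoffCoeff p q α)) '' Set.Icc 0 1)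

theorem min_le_chernoffCoeff {p q : V → ℝ} (hp : 0 ≤ p) (hq : 0 ≤ q) {α : ℝ}
    (hα : α ∈ Set.Icc (0 : ℝ) 1) (v : V) : min (p v) (q v) ≤ chernoffCoeff p q α :=
  (min_le_rpow_mul_rpow_one_sub (hp v) (hq v) hα).trans <|
    single_le_sum (f := fun w => p w ^ α * q w ^ (1 - α))
      (fun w _ => mul_nonneg (Real.rpow_nonneg (hp w) _) (Real.rpow_nonneg (hq w) _)) (mem_univ v)

theorem chernoffCoeff_pos {p q : V → ℝ} (hp : 0 ≤ p) (hq : 0 ≤ q)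
    (hpq : ∃ v, 0 < p v ∧ 0 < q v) {α : ℝ} (hα : α ∈ Set.Icc (0 : ℝ) 1) :
    0 < chernoffCoeff p q α := by
  obtain ⟨v, hpv, hqv⟩ := hpq
  exact (lt_min hpv hqv).trans_le (min_le_chernoffCoeff hp hq hα v)

theorem bddBelow_log_chernoffCoeff_image {p q : V → ℝ} (hp : 0 ≤ p) (hq : 0 ≤ q)
    (hpq : ∃ v, 0 < p v ∧ 0 < q v) :
    BddBelow ((fun α => Real.log (chernoffCoeff p q α)) '' Set.Icc 0 1) := by
  obtain ⟨v, hpv, hqv⟩ := hpq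
  refine ⟨Real.log (min (p v) (q v)), ?_⟩
  rintro _ ⟨α, hα, rfl⟩
  exact Real.log_le_log (lt_min hpv hqv) (min_le_chernoffCoeff hp hq hα v)

end SingleSensor

section IndependentSensors

variable {ι : Type*} [Fintype ι] [DecidableEq ι] {V : ι → Type*} [∀ k, Fintype (V k)]
  {p q : ∀ k, V k → ℝ}

theorem chernoffCoeff_pi_eq_sum_prod (hp : ∀ k, 0 ≤ p k) (hq : ∀ k, 0 ≤ q k) (α : ℝ) :
    chernoffCoeff (fun u : ∀ k, V k => ∏ k, p k (u k)) (fun u => ∏ k, q k (u k)) α =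
      ∑ u : ∀ k, V k, ∏ k, p k (u k) ^ α * q k (u k) ^ (1 - α) :=
  sum_congr rfl fun u _ => by
    rw [← Real.finsetProd_rpow _ _ fun k _ => hp k (u k),
      ← Real.finsetProd_rpow _ _ fun k _ => hq k (u k), prod_mul_distrib]

theorem chernoffCoeff_pi (hp : ∀ k, 0 ≤ p k) (hq : ∀ k, 0 ≤ q k) (α : ℝ) :
    chernoffCoeff (fun u : ∀ k, V k => ∏ k, p k (u k)) (fun u => ∏ k, q k (u k)) α =
      ∏ k, chernoffCoeff (p k) (q k) α :=
  (chernoffCoeff_pi_eq_sum_prod hp hq α).trans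
    (Fintype.prod_sum fun k v => p k v ^ α * q k v ^ (1 - α)).symm

theorem log_chernoffCoeff_pi (hp : ∀ k, 0 ≤ p k) (hq : ∀ k, 0 ≤ q k)
    (hpq : ∀ k, ∃ v, 0 < p k v ∧ 0 < q k v) {α : ℝ} (hα : α ∈ Set.Icc (0 : ℝ) 1) :
    Real.log (chernoffCoeff (fun u : ∀ k, V k => ∏ k, p k (u k)) (fun u => ∏ k, q k (u k)) α) =
      ∑ k, Real.log (chernoffCoeff (p k) (q k) α) := by
  rw [chernoffCoeff_pi hp hq,
    Real.log_prod fun k _ => (chernoffCoeff_pos (hp k) (hq k) (hpq k) hα).ne']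

theorem avg_chernoff_le_avg_of_single_general (hp : ∀ k, 0 ≤ p k) (hq : ∀ k, 0 ≤ q k)
    (hpq : ∀ k, ∃ v, 0 < p k v ∧ 0 < q k v) :
    chernoffInfo (fun u : ∀ k, V k => ∏ k, p k (u k)) (fun u => ∏ k, q k (u k)) ≤
      ∑ k, chernoffInfo (p k) (q k) := by
  simp only [chernoffInfo, sum_neg_distrib, neg_le_neg_iff]
  rw [Set.image_congr fun α hα => log_chernoffCoeff_pi hp hq hpq hα]
  exact sum_csInf_image_le_csInf_image_sum (Set.nonempty_Icc.2 zero_le_one) univ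
    fun k _ => bddBelow_log_chernoffCoeff_image (hp k) (hq k) (hpq k)

end IndependentSensors

/-- For `K` conditionally independent sensors with per-sensor conditional
pmfs `p₀ k, p₁ k` on `Fin L`, the average Chernoff information of the joint quantized
data is at most the average of the per-sensor Chernoff informations. -/
theorem avg_chernoff_le_avg_of_single (L K : ℕ) (hL : 1 ≤ L) (hK : 1 ≤ K)
    (p₀ p₁ : Fin K → Fin L → ℝ)
    (hp₀ : ∀ k v, 0 < p₀ k v) (hp₁ : ∀ k v, 0 < p₁ k v)
    (hs₀ : ∀ k, ∑ v, p₀ k v = 1) (hs₁ : ∀ k, ∑ v, p₁ k v = 1) :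
    -(1 / (K : ℝ)) * sInf
        ((fun α : ℝ => Real.log
            (∑ u : Fin K → Fin L, ∏ k, (p₀ k (u k)) ^ α * (p₁ k (u k)) ^ (1 - α)))
          '' Set.Icc (0:ℝ) 1)
      ≤ (1 / (K : ℝ)) * ∑ k,
          -sInf ((fun α : ℝ => Real.log (∑ v, (p₀ k v) ^ α * (p₁ k v) ^ (1 - α)))
            '' Set.Icc (0:ℝ) 1) := by
  have hp₀' : ∀ k, 0 ≤ p₀ k := fun k v => (hp₀ k v).le
  have hp₁' : ∀ k, 0 ≤ p₁ k := fun k v => (hp₁ k v).le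
  have h := avg_chernoff_le_avg_of_single_general hp₀' hp₁' fun k => ⟨⟨0, hL⟩, hp₀ k _, hp₁ k _⟩
  simp only [chernoffInfo, chernoffCoeff_pi_eq_sum_prod hp₀' hp₁'] at h
  rw [neg_mul, ← mul_neg]
  exact mul_le_mul_of_nonneg_left h (by positivity)
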